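/- Let α be a real constant and let U = {(x,y) ∈ ℝ² : y ≠ 0 and 3x² − y² ≠ 0}. Define on U × ℝ² the Hamiltonian H(x,y,p₁,p₂) = (p₁² + p₂²)/2 + α(x² + y²)²/(y²(3x² − y²)²) and the cubic function Y(x,y,p₁,p₂) = p₁³ − 3p₁p₂² + 2α·((−3x⁴ + 6x²y² + y⁴)/(y²(y² − 3x²)²))·p₁ + α·(16xy/(y² − 3x²)²)·p₂. Then the Poisson bracket {H,Y} := (∂H/∂p₁)(∂Y/∂x) + (∂H/∂p₂)(∂Y/∂y) − (∂H/∂x)(∂Y/∂p₁) − (∂H/∂y)(∂Y/∂p₂) vanishes identically on U × ℝ². -/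

import Mathlib

/-- The classical Hamiltonian of the two-dimensional rational three-body
Calogero system (with no central term), in cartesian coordinates. -/
noncomputable def calogeroH (α x y p₁ p₂ : ℝ) : ℝ :=
  (p₁ ^ 2 + p₂ ^ 2) / 2 + α * (x ^ 2 + y ^ 2) ^ 2 / (y ^ 2 * (3 * x ^ 2 - y ^ 2) ^ 2)

/-- The third order integral of motion of the Calogero system. -/
noncomputable def calogeroY (α x y p₁ p₂ : ℝ) : ℝ :=
  p₁ ^ 3 - 3 * p₁ * p₂ ^ 2
    + 2 * α * ((-3 * x ^ 4 + 6 * x ^ 2 * y ^ 2 + y ^ 4) /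
        (y ^ 2 * (y ^ 2 - 3 * x ^ 2) ^ 2)) * p₁
    + α * (16 * x * y / (y ^ 2 - 3 * x ^ 2) ^ 2) * p₂

section Momenta

variable {𝕜 : Type*} [NontriviallyNormedField 𝕜]

/-- The Poisson bracket `{F, G} = ∂F/∂p · ∂G/∂q - ∂F/∂q · ∂G/∂p` on a phase space with positions
`(x, y)` and momenta `(p₁, p₂)`. Partial derivatives are encoded by `deriv`, so the value is
meaningful only where those derivatives exist. -/
noncomputable def poissonBracket (F G : 𝕜 → 𝕜 → 𝕜 → 𝕜 → 𝕜) (x y p₁ p₂ : 𝕜) : 𝕜 :=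
  deriv (fun t => F x y t p₂) p₁ * deriv (fun t => G t y p₁ p₂) x
    + deriv (fun t => F x y p₁ t) p₂ * deriv (fun t => G x t p₁ p₂) y
    - deriv (fun t => F t y p₁ p₂) x * deriv (fun t => G x y t p₂) p₁
    - deriv (fun t => F x t p₁ p₂) y * deriv (fun t => G x y p₁ t) p₂

/-- The Hamiltonian of a particle of unit mass in the plane moving in the potential `V`. -/
def naturalHamiltonian (V : 𝕜 → 𝕜 → 𝕜) (x y p₁ p₂ : 𝕜) : 𝕜 :=
  (p₁ ^ 2 + p₂ ^ 2) / 2 + V x y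

/-- An odd cubic polynomial in the momenta, with constant leading coefficients `a`, `b`, `c`, `d`
and position-dependent linear coefficients `A`, `B`: the form sought for a third order integral
whose leading part is invariant under translations. -/
def cubicObservable (a b c d : 𝕜) (A B : 𝕜 → 𝕜 → 𝕜) (x y p₁ p₂ : 𝕜) : 𝕜 :=
  a * p₁ ^ 3 + b * p₁ ^ 2 * p₂ + c * p₁ * p₂ ^ 2 + d * p₂ ^ 3 + A x y * p₁ + B x y * p₂

/-- `f` has partial derivatives `fx` and `fy` at `(x, y)`. Only differentiability along the two
coordinate lines is required, which is all that `poissonBracket` sees. -/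
structure HasPartialDerivsAt (f : 𝕜 → 𝕜 → 𝕜) (fx fy x y : 𝕜) : Prop where
  fst : HasDerivAt (fun t => f t y) fx x
  snd : HasDerivAt (fun t => f x t) fy y

theorem HasPartialDerivsAt.const_mul {f : 𝕜 → 𝕜 → 𝕜} {fx fy x y : 𝕜} (c : 𝕜)
    (hf : HasPartialDerivsAt f fx fy x y) :
    HasPartialDerivsAt (fun x y => c * f x y) (c * fx) (c * fy) x y :=
  ⟨hf.fst.const_mul c, hf.snd.const_mul c⟩

theorem HasPartialDerivsAt.sq {f : 𝕜 → 𝕜 → 𝕜} {fx fy x y : 𝕜}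
    (hf : HasPartialDerivsAt f fx fy x y) :
    HasPartialDerivsAt (fun x y => f x y ^ 2) (2 * f x y * fx) (2 * f x y * fy) x y :=
  ⟨by simpa using hf.fst.fun_pow 2, by simpa using hf.snd.fun_pow 2⟩

theorem hasDerivAt_naturalHamiltonian_p₁ [NeZero (2 : 𝕜)] (V : 𝕜 → 𝕜 → 𝕜) (x y p₁ p₂ : 𝕜) :
    HasDerivAt (fun t => naturalHamiltonian V x y t p₂) p₁ p₁ := by
  have h := (((hasDerivAt_pow 2 p₁).add_const (p₂ ^ 2)).div_const 2).add_const (V x y)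
  exact h.congr_deriv (by simp [two_ne_zero])

theorem hasDerivAt_naturalHamiltonian_p₂ [NeZero (2 : 𝕜)] (V : 𝕜 → 𝕜 → 𝕜) (x y p₁ p₂ : 𝕜) :
    HasDerivAt (fun t => naturalHamiltonian V x y p₁ t) p₂ p₂ := by
  have h := (((hasDerivAt_pow 2 p₂).const_add (p₁ ^ 2)).div_const 2).add_const (V x y)
  exact h.congr_deriv (by simp [two_ne_zero])

theorem hasDerivAt_cubicObservable_p₁ (a b c d : 𝕜) (A B : 𝕜 → 𝕜 → 𝕜) (x y p₁ p₂ : 𝕜) :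
    HasDerivAt (fun t => cubicObservable a b c d A B x y t p₂)
      (3 * a * p₁ ^ 2 + 2 * b * p₁ * p₂ + c * p₂ ^ 2 + A x y) p₁ := by
  have h := ((((((hasDerivAt_pow 3 p₁).const_mul a).fun_add
    (((hasDerivAt_pow 2 p₁).const_mul b).mul_const p₂)).fun_add
    (((hasDerivAt_id' p₁).const_mul c).mul_const (p₂ ^ 2))).add_const (d * p₂ ^ 3)).fun_add
    ((hasDerivAt_id' p₁).const_mul (A x y))).add_const (B x y * p₂)
  exact h.congr_deriv (by push_cast; ring)

theorem hasDerivAt_cubicObservable_p₂ (a b c d : 𝕜) (A B : 𝕜 → 𝕜 → 𝕜) (x y p₁ p₂ : 𝕜) :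
    HasDerivAt (fun t => cubicObservable a b c d A B x y p₁ t)
      (b * p₁ ^ 2 + 2 * c * p₁ * p₂ + 3 * d * p₂ ^ 2 + B x y) p₂ := by
  have h := ((((((hasDerivAt_id' p₂).const_mul (b * p₁ ^ 2)).const_add (a * p₁ ^ 3)).fun_add
    ((hasDerivAt_pow 2 p₂).const_mul (c * p₁))).fun_add
    ((hasDerivAt_pow 3 p₂).const_mul d)).add_const (A x y * p₁)).fun_add
    ((hasDerivAt_id' p₂).const_mul (B x y))
  exact h.congr_deriv (by push_cast; ring)

theorem HasPartialDerivsAt.naturalHamiltonian {V : 𝕜 → 𝕜 → 𝕜} {Vx Vy x y : 𝕜}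
    (hV : HasPartialDerivsAt V Vx Vy x y) (p₁ p₂ : 𝕜) :
    HasPartialDerivsAt (fun x y => naturalHamiltonian V x y p₁ p₂) Vx Vy x y :=
  ⟨hV.fst.const_add _, hV.snd.const_add _⟩

theorem HasPartialDerivsAt.cubicObservable {A B : 𝕜 → 𝕜 → 𝕜} {Ax Ay Bx By x y : 𝕜}
    (hA : HasPartialDerivsAt A Ax Ay x y) (hB : HasPartialDerivsAt B Bx By x y)
    (a b c d p₁ p₂ : 𝕜) :
    HasPartialDerivsAt (fun x y => cubicObservable a b c d A B x y p₁ p₂)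
      (Ax * p₁ + Bx * p₂) (Ay * p₁ + By * p₂) x y :=
  ⟨((hA.fst.mul_const p₁).const_add _).fun_add (hB.fst.mul_const p₂),
    ((hA.snd.mul_const p₁).const_add _).fun_add (hB.snd.mul_const p₂)⟩

theorem poissonBracket_naturalHamiltonian_cubicObservable [NeZero (2 : 𝕜)]
    {V A B : 𝕜 → 𝕜 → 𝕜} {Vx Vy Ax Ay Bx By x y : 𝕜} (hV : HasPartialDerivsAt V Vx Vy x y)
    (hA : HasPartialDerivsAt A Ax Ay x y) (hB : HasPartialDerivsAt B Bx By x y)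
    (a b c d p₁ p₂ : 𝕜) :
    poissonBracket (naturalHamiltonian V) (cubicObservable a b c d A B) x y p₁ p₂
      = (Ax - (3 * a * Vx + b * Vy)) * p₁ ^ 2
        + (Ay + Bx - 2 * (b * Vx + c * Vy)) * (p₁ * p₂)
        + (By - (c * Vx + 3 * d * Vy)) * p₂ ^ 2
        - (A x y * Vx + B x y * Vy) := by
  have hH := hV.naturalHamiltonian p₁ p₂
  have hY := hA.cubicObservable hB a b c d p₁ p₂
  rw [poissonBracket, hH.fst.deriv, hH.snd.deriv, hY.fst.deriv, hY.snd.deriv,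
    (hasDerivAt_naturalHamiltonian_p₁ V x y p₁ p₂).deriv,
    (hasDerivAt_naturalHamiltonian_p₂ V x y p₁ p₂).deriv,
    (hasDerivAt_cubicObservable_p₁ a b c d A B x y p₁ p₂).deriv,
    (hasDerivAt_cubicObservable_p₂ a b c d A B x y p₁ p₂).deriv]
  ring

/- With `V = α w²` and `(A, B) = 2α (∂w/∂y, -∂w/∂x)` the momentum-free equation `A Vx + B Vy = 0`
is automatic, and the other three collapse to the two equations `hxy` and `hxx` on `w`. -/
theorem poissonBracket_eq_zero_of_potential_eq_sq [NeZero (2 : 𝕜)]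
    {w wx wy : 𝕜 → 𝕜 → 𝕜} {wxx wxy wyy x y : 𝕜}
    (hw : HasPartialDerivsAt w (wx x y) (wy x y) x y)
    (hwx : HasPartialDerivsAt wx wxx wxy x y) (hwy : HasPartialDerivsAt wy wxy wyy x y)
    (hxy : wxy = 3 * w x y * wx x y) (hxx : wxx - wyy = 6 * w x y * wy x y) (α p₁ p₂ : 𝕜) :
    poissonBracket (naturalHamiltonian fun x y => α * w x y ^ 2)
      (cubicObservable 1 0 (-3) 0 (fun x y => 2 * α * wy x y) (fun x y => -2 * α * wx x y))
      x y p₁ p₂ = 0 := by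
  rw [poissonBracket_naturalHamiltonian_cubicObservable (hw.sq.const_mul α)
    (hwy.const_mul (2 * α)) (hwx.const_mul (-2 * α)), hxy, eq_add_of_sub_eq hxx]
  ring

end Momenta

section Calogero

/-- The function `w = 1 / (r sin 3θ)` in cartesian coordinates; the Calogero potential is
`α w²`. -/
noncomputable def calogeroRoot (x y : ℝ) : ℝ :=
  (x ^ 2 + y ^ 2) / (y * (3 * x ^ 2 - y ^ 2))

/-- The partial derivative `∂w/∂x` of `w = calogeroRoot`. -/
noncomputable def calogeroRootX (x y : ℝ) : ℝ :=
  -8 * x * y / (3 * x ^ 2 - y ^ 2) ^ 2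

/-- The partial derivative `∂w/∂y` of `w = calogeroRoot`. -/
noncomputable def calogeroRootY (x y : ℝ) : ℝ :=
  (-3 * x ^ 4 + 6 * x ^ 2 * y ^ 2 + y ^ 4) / (y ^ 2 * (3 * x ^ 2 - y ^ 2) ^ 2)

theorem calogeroH_eq_naturalHamiltonian (α : ℝ) :
    calogeroH α = naturalHamiltonian fun x y => α * calogeroRoot x y ^ 2 := by
  funext x y p₁ p₂
  rw [calogeroH, naturalHamiltonian, calogeroRoot, div_pow, mul_pow, mul_div_assoc]

theorem calogeroY_eq_cubicObservable (α : ℝ) :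
    calogeroY α = cubicObservable 1 0 (-3) 0
      (fun x y => 2 * α * calogeroRootY x y) (fun x y => -2 * α * calogeroRootX x y) := by
  funext x y p₁ p₂
  simp only [calogeroY, cubicObservable, calogeroRootX, calogeroRootY, sub_sq_comm (y ^ 2)]
  ring

theorem hasDerivAt_three_mul_sq_sub_sq_fst (x y : ℝ) :
    HasDerivAt (fun t => 3 * t ^ 2 - y ^ 2) (6 * x) x :=
  (((hasDerivAt_pow 2 x).const_mul 3).sub_const (y ^ 2)).congr_deriv (by push_cast; ring)

theorem hasDerivAt_three_mul_sq_sub_sq_snd (x y : ℝ) :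
    HasDerivAt (fun t => 3 * x ^ 2 - t ^ 2) (-2 * y) y :=
  ((hasDerivAt_pow 2 y).const_sub (3 * x ^ 2)).congr_deriv (by push_cast; ring)

variable {x y : ℝ}

theorem hasPartialDerivsAt_calogeroRoot (hy : y ≠ 0) (hxy : 3 * x ^ 2 - y ^ 2 ≠ 0) :
    HasPartialDerivsAt calogeroRoot (calogeroRootX x y) (calogeroRootY x y) x y where
  fst := by
    have h := ((hasDerivAt_pow 2 x).add_const (y ^ 2)).fun_div
      ((hasDerivAt_three_mul_sq_sub_sq_fst x y).const_mul y) (mul_ne_zero hy hxy)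
    refine h.congr_deriv ?_
    rw [calogeroRootX]
    push_cast
    field_simp
    ring
  snd := by
    have h := ((hasDerivAt_pow 2 y).const_add (x ^ 2)).fun_div
      ((hasDerivAt_id' y).fun_mul (hasDerivAt_three_mul_sq_sub_sq_snd x y)) (mul_ne_zero hy hxy)
    refine h.congr_deriv ?_
    rw [calogeroRootY]
    push_cast
    field_simp
    ring

/- The value of `∂²w/∂x²` is the one forced by `∂²w/∂x² - ∂²w/∂y² = 6 w ∂w/∂y`, with `∂²w/∂y²` read
off from `∂w/∂y = (3 w² - 1 / y²) / 2`. -/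
theorem hasPartialDerivsAt_calogeroRootX (hy : y ≠ 0) (hxy : 3 * x ^ 2 - y ^ 2 ≠ 0) :
    HasPartialDerivsAt calogeroRootX
      (9 * calogeroRoot x y * calogeroRootY x y + 1 / y ^ 3)
      (3 * calogeroRoot x y * calogeroRootX x y) x y where
  fst := by
    have h := (((hasDerivAt_id' x).const_mul (-8)).mul_const y).fun_div
      ((hasDerivAt_three_mul_sq_sub_sq_fst x y).fun_pow 2) (pow_ne_zero 2 hxy)
    refine h.congr_deriv ?_
    rw [calogeroRoot, calogeroRootY]
    push_cast
    field_simp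
    ring
  snd := by
    have h := ((hasDerivAt_id' y).const_mul (-8 * x)).fun_div
      ((hasDerivAt_three_mul_sq_sub_sq_snd x y).fun_pow 2) (pow_ne_zero 2 hxy)
    refine h.congr_deriv ?_
    rw [calogeroRoot, calogeroRootX]
    push_cast
    field_simp
    ring

theorem calogeroRootY_eq (hy : y ≠ 0) (hxy : 3 * x ^ 2 - y ^ 2 ≠ 0) :
    calogeroRootY x y = (3 * calogeroRoot x y ^ 2 - (y ^ 2)⁻¹) / 2 := by
  rw [calogeroRoot, calogeroRootY]
  field_simp
  ring

theorem hasPartialDerivsAt_calogeroRootY (hy : y ≠ 0) (hxy : 3 * x ^ 2 - y ^ 2 ≠ 0) :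
    HasPartialDerivsAt calogeroRootY
      (3 * calogeroRoot x y * calogeroRootX x y)
      (3 * calogeroRoot x y * calogeroRootY x y + 1 / y ^ 3) x y where
  fst := by
    have hw := (hasPartialDerivsAt_calogeroRoot hy hxy).sq.fst
    have h := ((hw.const_mul 3).sub_const (y ^ 2)⁻¹).div_const 2
    have heq : ∀ᶠ t in nhds x,
        calogeroRootY t y = (3 * calogeroRoot t y ^ 2 - (y ^ 2)⁻¹) / 2 :=
      ((hasDerivAt_three_mul_sq_sub_sq_fst x y).continuousAt.eventually_ne hxy).mono
        fun t ht => calogeroRootY_eq hy ht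
    exact (h.congr_of_eventuallyEq heq).congr_deriv (by ring)
  snd := by
    have hw := (hasPartialDerivsAt_calogeroRoot hy hxy).sq.snd
    have h := ((hw.const_mul 3).fun_sub
      ((hasDerivAt_pow 2 y).fun_inv (pow_ne_zero 2 hy))).div_const 2
    have heq : ∀ᶠ t in nhds y,
        calogeroRootY x t = (3 * calogeroRoot x t ^ 2 - (t ^ 2)⁻¹) / 2 := by
      filter_upwards [eventually_ne_nhds hy,
        (hasDerivAt_three_mul_sq_sub_sq_snd x y).continuousAt.eventually_ne hxy] with t ht hxt
      exact calogeroRootY_eq ht hxt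
    refine (h.congr_of_eventuallyEq heq).congr_deriv ?_
    push_cast
    field_simp
    ring

end Calogero

/-- The Poisson bracket `{H,Y}` vanishes identically on the domain
`y ≠ 0`, `3x² − y² ≠ 0`: the cubic function `Y` is a third order integral of
motion of the Calogero Hamiltonian `H`. -/
theorem calogero_poisson_bracket_vanishes (α : ℝ) (x y p₁ p₂ : ℝ)
    (hy : y ≠ 0) (hxy : 3 * x ^ 2 - y ^ 2 ≠ 0) :
    deriv (fun t => calogeroH α x y t p₂) p₁ * deriv (fun t => calogeroY α t y p₁ p₂) x
      + deriv (fun t => calogeroH α x y p₁ t) p₂ * deriv (fun t => calogeroY α x t p₁ p₂) y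
      - deriv (fun t => calogeroH α t y p₁ p₂) x * deriv (fun t => calogeroY α x y t p₂) p₁
      - deriv (fun t => calogeroH α x t p₁ p₂) y * deriv (fun t => calogeroY α x y p₁ t) p₂
      = 0 := by
  change poissonBracket (calogeroH α) (calogeroY α) x y p₁ p₂ = 0
  rw [calogeroH_eq_naturalHamiltonian, calogeroY_eq_cubicObservable]
  exact poissonBracket_eq_zero_of_potential_eq_sq (hasPartialDerivsAt_calogeroRoot hy hxy)
    (hasPartialDerivsAt_calogeroRootX hy hxy) (hasPartialDerivsAt_calogeroRootY hy hxy)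
    rfl (by ring) α p₁ p₂
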